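/- Let (ρ, u) be a smooth (C^∞) solution of the steady isentropic compressible Euler equations on U with ρ > 0 everywhere (stagnation points are allowed). Then, with w = curl u, the identity |u|² (u·∇)((u·w)/ρ) − ((u·w)/ρ)(u·∇)(|u|²) + (2c²(ρ)/ρ²)(|u|²(w·∇)ρ − (u·w)(u·∇)ρ) = 0 holds on U, where |u|² = u₁² + u₂² + u₃² and u·w = u₁w₁ + u₂w₂ + u₃w₃. -/

import Mathlib

/-- Partial derivative in direction `i` of a scalar function on `ℝ³`. -/
noncomputable def pd (i : Fin 3) (f : (Fin 3 → ℝ) → ℝ) (x : Fin 3 → ℝ) : ℝ :=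
  fderiv ℝ f x (Pi.single i 1)

/-- The curl of a vector field on `ℝ³`. -/
noncomputable def curl (u : Fin 3 → (Fin 3 → ℝ) → ℝ) : Fin 3 → (Fin 3 → ℝ) → ℝ :=
  ![fun x => pd 1 (u 2) x - pd 2 (u 1) x,
    fun x => pd 2 (u 0) x - pd 0 (u 2) x,
    fun x => pd 0 (u 1) x - pd 1 (u 0) x]

/-!
For any `C²` field `u` with `w = curl u`, taking the curl of the acceleration `(u·∇)u` and
pairing with `u` gives `(u·∇)(u·w) = 2 w·(u·∇)u + u·curl ((u·∇)u) - (u·w) div u`,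
because `u·(w·∇)u = w·(u·∇)u`: the two sides differ by `w·(w × u) = 0`.

For a steady flow of density `ρ`, pressure `P(ρ)` and squared sound speed `c² = dP/dρ`, the momentum
equation says that the acceleration is `-(c²/ρ) ∇ρ`. This is curl-free since the coefficient
depends on `ρ` only, and the continuity equation `ρ div u = -(u·∇)ρ` absorbs the divergence term,
leaving `(u·∇)((u·w)/ρ) = -(2 c²/ρ²) (w·∇)ρ`. Combining this with
`(u·∇)|u|² = -(2 c²/ρ) (u·∇)ρ` gives the claim.
-/

/-- The convective derivative `(v·∇)f` of a scalar function `f` along the vector field `v`. -/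
noncomputable def convDeriv (v : Fin 3 → (Fin 3 → ℝ) → ℝ) (f : (Fin 3 → ℝ) → ℝ)
    (x : Fin 3 → ℝ) : ℝ :=
  ∑ i, v i x * pd i f x

/-- The divergence of a vector field on `ℝ³`. -/
noncomputable def divergence (v : Fin 3 → (Fin 3 → ℝ) → ℝ) (x : Fin 3 → ℝ) : ℝ :=
  ∑ i, pd i (v i) x

/-- The helicity density `u·curl u` of a velocity field. -/
noncomputable def helicityDensity (u : Fin 3 → (Fin 3 → ℝ) → ℝ) (x : Fin 3 → ℝ) : ℝ :=
  ∑ i, u i x * curl u i x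

section Calculus

variable {f g : (Fin 3 → ℝ) → ℝ} {u v : Fin 3 → (Fin 3 → ℝ) → ℝ} {x : Fin 3 → ℝ}

theorem pd_sub (k : Fin 3) (hf : DifferentiableAt ℝ f x) (hg : DifferentiableAt ℝ g x) :
    pd k (fun y => f y - g y) x = pd k f x - pd k g x := by
  simp only [pd, fderiv_fun_sub hf hg, sub_apply]

theorem pd_mul (k : Fin 3) (hf : DifferentiableAt ℝ f x) (hg : DifferentiableAt ℝ g x) :
    pd k (fun y => f y * g y) x = pd k f x * g x + f x * pd k g x := by
  simp only [pd, fderiv_fun_mul hf hg, add_apply, smul_apply, smul_eq_mul]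
  ring

theorem pd_sum {ι : Type*} {s : Finset ι} {F : ι → (Fin 3 → ℝ) → ℝ} (k : Fin 3)
    (hF : ∀ i ∈ s, DifferentiableAt ℝ (F i) x) :
    pd k (fun y => ∑ i ∈ s, F i y) x = ∑ i ∈ s, pd k (F i) x := by
  simp only [pd, fderiv_fun_sum hF, sum_apply]

theorem pd_comp {φ : ℝ → ℝ} (k : Fin 3) (hφ : DifferentiableAt ℝ φ (f x))
    (hf : DifferentiableAt ℝ f x) :
    pd k (fun y => φ (f y)) x = deriv φ (f x) * pd k f x := by
  have h : HasFDerivAt (fun y => φ (f y)) (deriv φ (f x) • fderiv ℝ f x) x :=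
    hφ.hasDerivAt.comp_hasFDerivAt x hf.hasFDerivAt
  simp only [pd, h.fderiv, smul_apply, smul_eq_mul]

theorem pd_congr (k : Fin 3) (h : f =ᶠ[nhds x] g) : pd k f x = pd k g x := by
  simp only [pd, h.fderiv_eq]

theorem curl_congr (k : Fin 3) (h : ∀ i, u i =ᶠ[nhds x] v i) : curl u k x = curl v k x := by
  fin_cases k <;> simp [curl, pd_congr _ (h _)]

theorem differentiableAt_fderiv {E F : Type*} [NormedAddCommGroup E] [NormedSpace ℝ E]
    [NormedAddCommGroup F] [NormedSpace ℝ F] {f : E → F} {x : E} (hf : ContDiffAt ℝ 2 f x) :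
    DifferentiableAt ℝ (fderiv ℝ f) x :=
  (hf.fderiv_right (m := 1) (by norm_num)).differentiableAt one_ne_zero

theorem differentiableAt_pd (k : Fin 3) (hf : ContDiffAt ℝ 2 f x) :
    DifferentiableAt ℝ (pd k f) x :=
  (differentiableAt_fderiv hf).clm_apply (differentiableAt_const _)

theorem pd_pd_eq_fderiv_fderiv (j k : Fin 3) (hf : ContDiffAt ℝ 2 f x) :
    pd j (pd k f) x = fderiv ℝ (fderiv ℝ f) x (Pi.single j 1) (Pi.single k 1) := by
  change fderiv ℝ (fun y => fderiv ℝ f y (Pi.single k 1)) x (Pi.single j 1) = _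
  simp [fderiv_clm_apply (differentiableAt_fderiv hf) (differentiableAt_const _)]

theorem pd_comm (j k : Fin 3) (hf : ContDiffAt ℝ 2 f x) :
    pd j (pd k f) x = pd k (pd j f) x := by
  rw [pd_pd_eq_fderiv_fderiv j k hf, pd_pd_eq_fderiv_fderiv k j hf]
  exact hf.isSymmSndFDerivAt (by simp) _ _

theorem differentiableAt_curl (k : Fin 3) (hu : ∀ i, ContDiffAt ℝ 2 (u i) x) :
    DifferentiableAt ℝ (curl u k) x := by
  fin_cases k <;> exact (differentiableAt_pd _ (hu _)).sub (differentiableAt_pd _ (hu _))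

theorem differentiableAt_helicityDensity (hu : ∀ i, ContDiffAt ℝ 2 (u i) x) :
    DifferentiableAt ℝ (helicityDensity u) x :=
  DifferentiableAt.fun_sum fun i _ =>
    ((hu i).differentiableAt two_ne_zero).mul (differentiableAt_curl i hu)

theorem convDeriv_sub (hf : DifferentiableAt ℝ f x) (hg : DifferentiableAt ℝ g x) :
    convDeriv v (fun y => f y - g y) x = convDeriv v f x - convDeriv v g x := by
  simp only [convDeriv, pd_sub _ hf hg, mul_sub, Finset.sum_sub_distrib]

theorem convDeriv_mul (hf : DifferentiableAt ℝ f x) (hg : DifferentiableAt ℝ g x) :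
    convDeriv v (fun y => f y * g y) x = convDeriv v f x * g x + f x * convDeriv v g x := by
  simp only [convDeriv, pd_mul _ hf hg, Finset.sum_mul, Finset.mul_sum,
    ← Finset.sum_add_distrib]
  exact Finset.sum_congr rfl fun i _ => by ring

theorem convDeriv_sum {ι : Type*} {s : Finset ι} {F : ι → (Fin 3 → ℝ) → ℝ}
    (hF : ∀ i ∈ s, DifferentiableAt ℝ (F i) x) :
    convDeriv v (fun y => ∑ i ∈ s, F i y) x = ∑ i ∈ s, convDeriv v (F i) x := by
  simp only [convDeriv, pd_sum _ hF, Finset.mul_sum]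
  exact Finset.sum_comm

theorem convDeriv_div (hf : DifferentiableAt ℝ f x) (hg : DifferentiableAt ℝ g x)
    (hg0 : g x ≠ 0) :
    convDeriv v (fun y => f y / g y) x =
      (convDeriv v f x * g x - f x * convDeriv v g x) / g x ^ 2 := by
  have hinv : convDeriv v (fun y => (g y)⁻¹) x = -convDeriv v g x / g x ^ 2 := by
    simp only [convDeriv, pd_comp _ (differentiableAt_inv hg0) hg, deriv_inv,
      ← Finset.sum_neg_distrib, Finset.sum_div]
    exact Finset.sum_congr rfl fun i _ => by ring
  simp only [div_eq_mul_inv (f _)]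
  rw [convDeriv_mul hf (hg.fun_inv hg0), hinv]
  field_simp
  ring

theorem convDeriv_sum_mul (hu : ∀ i, DifferentiableAt ℝ (u i) x)
    {w : Fin 3 → (Fin 3 → ℝ) → ℝ} (hw : ∀ i, DifferentiableAt ℝ (w i) x) :
    convDeriv v (fun y => ∑ i, u i y * w i y) x =
      ∑ i, convDeriv v (u i) x * w i x + ∑ i, u i x * convDeriv v (w i) x := by
  rw [convDeriv_sum fun i _ => (hu i).fun_mul (hw i), ← Finset.sum_add_distrib]
  exact Finset.sum_congr rfl fun i _ => convDeriv_mul (hu i) (hw i)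

theorem convDeriv_sum_sq (hu : ∀ i, DifferentiableAt ℝ (u i) x) :
    convDeriv v (fun y => ∑ i, u i y ^ 2) x = 2 * ∑ i, u i x * convDeriv v (u i) x := by
  simp only [sq, convDeriv_sum_mul hu hu, two_mul, mul_comm (convDeriv v (u _) x)]

theorem divergence_mul (hf : DifferentiableAt ℝ f x) (hu : ∀ i, DifferentiableAt ℝ (u i) x) :
    divergence (fun i y => f y * u i y) x = f x * divergence u x + convDeriv u f x := by
  simp only [divergence, convDeriv, pd_mul _ hf (hu _), Finset.mul_sum,
    ← Finset.sum_add_distrib]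
  exact Finset.sum_congr rfl fun i _ => by ring

theorem pd_convDeriv (k : Fin 3) (hv : ∀ i, DifferentiableAt ℝ (v i) x)
    (hf : ContDiffAt ℝ 2 f x) :
    pd k (convDeriv v f) x = convDeriv v (pd k f) x + ∑ j, pd k (v j) x * pd j f x := by
  have hpd := fun j => differentiableAt_pd j hf
  change pd k (fun y => ∑ j, v j y * pd j f y) x = _
  rw [pd_sum k fun j _ => (hv j).fun_mul (hpd j), convDeriv, ← Finset.sum_add_distrib]
  refine Finset.sum_congr rfl fun j _ => ?_
  rw [pd_mul k (hv j) (hpd j), pd_comm k j hf, add_comm]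

theorem curl_comp_mul_pd {φ : ℝ → ℝ} (k : Fin 3) (hφ : DifferentiableAt ℝ φ (f x))
    (hf : ContDiffAt ℝ 2 f x) :
    curl (fun i y => φ (f y) * pd i f y) k x = 0 := by
  have hfd : DifferentiableAt ℝ f x := hf.differentiableAt two_ne_zero
  have hφf : DifferentiableAt ℝ (fun y => φ (f y)) x := hφ.comp x hfd
  have symm (i j : Fin 3) : pd i (fun y => φ (f y) * pd j f y) x =
      pd j (fun y => φ (f y) * pd i f y) x := by
    rw [pd_mul i hφf (differentiableAt_pd j hf), pd_mul j hφf (differentiableAt_pd i hf),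
      pd_comp i hφ hfd, pd_comp j hφ hfd, pd_comm i j hf]
    ring
  fin_cases k <;> exact sub_eq_zero.mpr (symm _ _)

end Calculus

section Helicity

variable {u : Fin 3 → (Fin 3 → ℝ) → ℝ} {x : Fin 3 → ℝ}

theorem curl_convDeriv_self (k : Fin 3) (hu : ∀ i, ContDiffAt ℝ 2 (u i) x) :
    curl (fun i => convDeriv u (u i)) k x =
      convDeriv u (curl u k) x - convDeriv (curl u) (u k) x + curl u k x * divergence u x := by
  have hud := fun i => (hu i).differentiableAt two_ne_zero
  have hpd := fun i j => differentiableAt_pd i (hu j)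
  -- Mixed partials commute, so only the commutator `[∂ₐ, u·∇]` separates the two sides.
  have commutator (a b : Fin 3) : pd a (convDeriv u (u b)) x - pd b (convDeriv u (u a)) x =
      convDeriv u (fun y => pd a (u b) y - pd b (u a) y) x +
        ∑ j, (pd a (u j) x * pd j (u b) x - pd b (u j) x * pd j (u a) x) := by
    rw [pd_convDeriv a hud (hu b), pd_convDeriv b hud (hu a), convDeriv_sub (hpd a b) (hpd b a),
      Finset.sum_sub_distrib]
    ring
  match k with
  | 0 =>
    refine (commutator 1 2).trans ?_
    simp only [convDeriv, curl, divergence, Fin.sum_univ_three, Matrix.cons_val]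
    ring
  | 1 =>
    refine (commutator 2 0).trans ?_
    simp only [convDeriv, curl, divergence, Fin.sum_univ_three, Matrix.cons_val]
    ring
  | 2 =>
    refine (commutator 0 1).trans ?_
    simp only [convDeriv, curl, divergence, Fin.sum_univ_three, Matrix.cons_val]
    ring

theorem sum_mul_convDeriv_curl (u : Fin 3 → (Fin 3 → ℝ) → ℝ) (x : Fin 3 → ℝ) :
    ∑ i, u i x * convDeriv (curl u) (u i) x = ∑ i, curl u i x * convDeriv u (u i) x := by
  simp only [convDeriv, curl, Fin.sum_univ_three, Matrix.cons_val]
  ring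

theorem convDeriv_helicityDensity (hu : ∀ i, ContDiffAt ℝ 2 (u i) x) :
    convDeriv u (helicityDensity u) x =
      2 * ∑ i, curl u i x * convDeriv u (u i) x
        + ∑ i, u i x * curl (fun j => convDeriv u (u j)) i x
        - helicityDensity u x * divergence u x := by
  have product_rule : convDeriv u (helicityDensity u) x =
      ∑ i, curl u i x * convDeriv u (u i) x + ∑ i, u i x * convDeriv u (curl u i) x := by
    simp only [mul_comm (curl u _ x)]
    exact convDeriv_sum_mul (fun i => (hu i).differentiableAt two_ne_zero)
      fun i => differentiableAt_curl i hu
  have vorticity : ∑ i, u i x * curl (fun j => convDeriv u (u j)) i x =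
      ∑ i, u i x * convDeriv u (curl u i) x - ∑ i, u i x * convDeriv (curl u) (u i) x
        + helicityDensity u x * divergence u x := by
    simp only [curl_convDeriv_self _ hu, helicityDensity, mul_add, mul_sub, Finset.sum_add_distrib,
      Finset.sum_sub_distrib, Finset.sum_mul, mul_assoc]
  rw [product_rule, vorticity, sum_mul_convDeriv_curl]
  ring

end Helicity

/-- A steady compressible Euler flow of class `C²` on the open set `U` with density `ρ`, velocity
`u` and barotropic pressure law `p = P(ρ)`, so that the squared sound speed is `deriv P (ρ x)`. -/
structure IsSteadyEulerFlow (P : ℝ → ℝ) (ρ : (Fin 3 → ℝ) → ℝ) (u : Fin 3 → (Fin 3 → ℝ) → ℝ)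
    (U : Set (Fin 3 → ℝ)) : Prop where
  isOpen : IsOpen U
  contDiffAt_pressure : ∀ x ∈ U, ContDiffAt ℝ 2 P (ρ x)
  contDiffOn_density : ContDiffOn ℝ 2 ρ U
  contDiffOn_velocity : ∀ i, ContDiffOn ℝ 2 (u i) U
  density_ne_zero : ∀ x ∈ U, ρ x ≠ 0
  mass : ∀ x ∈ U, divergence (fun i y => ρ y * u i y) x = 0
  momentum : ∀ i, ∀ x ∈ U,
    divergence (fun j y => ρ y * u i y * u j y) x + pd i (fun y => P (ρ y)) x = 0

namespace IsSteadyEulerFlow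

variable {P : ℝ → ℝ} {ρ : (Fin 3 → ℝ) → ℝ} {u : Fin 3 → (Fin 3 → ℝ) → ℝ}
  {U : Set (Fin 3 → ℝ)} {x : Fin 3 → ℝ}

theorem contDiffAt_density (h : IsSteadyEulerFlow P ρ u U) (hx : x ∈ U) : ContDiffAt ℝ 2 ρ x :=
  h.contDiffOn_density.contDiffAt (h.isOpen.mem_nhds hx)

theorem contDiffAt_velocity (h : IsSteadyEulerFlow P ρ u U) (hx : x ∈ U) (i : Fin 3) :
    ContDiffAt ℝ 2 (u i) x :=
  (h.contDiffOn_velocity i).contDiffAt (h.isOpen.mem_nhds hx)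

theorem differentiableAt_density (h : IsSteadyEulerFlow P ρ u U) (hx : x ∈ U) :
    DifferentiableAt ℝ ρ x :=
  (h.contDiffAt_density hx).differentiableAt two_ne_zero

theorem differentiableAt_velocity (h : IsSteadyEulerFlow P ρ u U) (hx : x ∈ U) (i : Fin 3) :
    DifferentiableAt ℝ (u i) x :=
  (h.contDiffAt_velocity hx i).differentiableAt two_ne_zero

theorem density_mul_divergence (h : IsSteadyEulerFlow P ρ u U) (hx : x ∈ U) :
    ρ x * divergence u x = -convDeriv u ρ x := by
  have hmass := h.mass x hx
  rw [divergence_mul (h.differentiableAt_density hx) (h.differentiableAt_velocity hx)] at hmass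
  linarith

theorem convDeriv_velocity (h : IsSteadyEulerFlow P ρ u U) (hx : x ∈ U) (i : Fin 3) :
    convDeriv u (u i) x = -(deriv P (ρ x) / ρ x) * pd i ρ x := by
  have hρ := h.differentiableAt_density hx
  have hu := h.differentiableAt_velocity hx
  have hρ0 := h.density_ne_zero x hx
  have hmom := h.momentum i x hx
  rw [divergence_mul (hρ.fun_mul (hu i)) hu, convDeriv_mul hρ (hu i),
    pd_comp i ((h.contDiffAt_pressure x hx).differentiableAt two_ne_zero) hρ] at hmom
  field_simp
  linear_combination hmom - u i x * h.density_mul_divergence hx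

theorem sum_mul_convDeriv_velocity (h : IsSteadyEulerFlow P ρ u U) (hx : x ∈ U)
    (v : Fin 3 → (Fin 3 → ℝ) → ℝ) :
    ∑ i, v i x * convDeriv u (u i) x = -(deriv P (ρ x) / ρ x) * convDeriv v ρ x := by
  simp_rw [h.convDeriv_velocity hx, convDeriv, Finset.mul_sum, mul_left_comm]

theorem curl_convDeriv_velocity (h : IsSteadyEulerFlow P ρ u U) (hx : x ∈ U) (k : Fin 3) :
    curl (fun i => convDeriv u (u i)) k x = 0 := by
  have acceleration (i : Fin 3) :
      convDeriv u (u i) =ᶠ[nhds x] fun y => -(deriv P (ρ y) / ρ y) * pd i ρ y := by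
    filter_upwards [h.isOpen.mem_nhds hx] with y hy using h.convDeriv_velocity hy i
  have hP : DifferentiableAt ℝ (deriv P) (ρ x) :=
    (ContDiffAt.derivWithin (m := 1) (h.contDiffAt_pressure x hx) (by norm_num)).differentiableAt
      one_ne_zero
  rw [curl_congr k acceleration]
  exact curl_comp_mul_pd (φ := fun r => -(deriv P r / r)) k
    (hP.div differentiableAt_id (h.density_ne_zero x hx)).neg (h.contDiffAt_density hx)

theorem convDeriv_helicityDensity_div (h : IsSteadyEulerFlow P ρ u U) (hx : x ∈ U) :
    convDeriv u (fun y => helicityDensity u y / ρ y) x =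
      -(2 * deriv P (ρ x) / ρ x ^ 2) * convDeriv (curl u) ρ x := by
  have hu := h.contDiffAt_velocity hx
  have hρ0 := h.density_ne_zero x hx
  have transport : convDeriv u (helicityDensity u) x =
      -(2 * deriv P (ρ x) / ρ x) * convDeriv (curl u) ρ x
        - helicityDensity u x * divergence u x := by
    simp only [convDeriv_helicityDensity hu, h.sum_mul_convDeriv_velocity hx,
      h.curl_convDeriv_velocity hx, mul_zero, Finset.sum_const_zero]
    ring
  rw [convDeriv_div (differentiableAt_helicityDensity hu) (h.differentiableAt_density hx) hρ0,
    transport]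
  field_simp
  linear_combination -helicityDensity u x * h.density_mul_divergence hx

theorem convDeriv_sum_velocity_sq (h : IsSteadyEulerFlow P ρ u U) (hx : x ∈ U) :
    convDeriv u (fun y => ∑ i, u i y ^ 2) x =
      -(2 * deriv P (ρ x) / ρ x) * convDeriv u ρ x := by
  rw [convDeriv_sum_sq (h.differentiableAt_velocity hx), h.sum_mul_convDeriv_velocity hx]
  ring

end IsSteadyEulerFlow

theorem helicity_identity_general {P : ℝ → ℝ} {ρ : (Fin 3 → ℝ) → ℝ}
    {u : Fin 3 → (Fin 3 → ℝ) → ℝ} {U : Set (Fin 3 → ℝ)} (h : IsSteadyEulerFlow P ρ u U)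
    {x : Fin 3 → ℝ} (hx : x ∈ U) :
    (∑ i, u i x ^ 2) * convDeriv u (fun y => helicityDensity u y / ρ y) x
      - helicityDensity u x / ρ x * convDeriv u (fun y => ∑ i, u i y ^ 2) x
      + 2 * deriv P (ρ x) / ρ x ^ 2 *
        ((∑ i, u i x ^ 2) * convDeriv (curl u) ρ x
          - helicityDensity u x * convDeriv u ρ x) = 0 := by
  rw [h.convDeriv_helicityDensity_div hx, h.convDeriv_sum_velocity_sq hx]
  ring

theorem deriv_rpow_div_exponent {γ r : ℝ} (hγ : γ ≠ 0) (hr : r ≠ 0) :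
    deriv (fun s : ℝ => s ^ γ / γ) r = r ^ (γ - 1) := by
  rw [deriv_div_const, (Real.hasDerivAt_rpow_const (Or.inl hr)).deriv, mul_div_cancel_left₀ _ hγ]

/-- identity (3.15) for the helicity-type quantity `(u·w)/ρ`,
valid even in the presence of stagnation points. -/
theorem helicity_identity
    (U : Set (Fin 3 → ℝ)) (hU : IsOpen U) (γ : ℝ) (hγ1 : 1 < γ) (hγ3 : γ < 3)
    (ρ : (Fin 3 → ℝ) → ℝ) (u : Fin 3 → (Fin 3 → ℝ) → ℝ)
    (hρ : ContDiffOn ℝ (⊤ : ℕ∞) ρ U) (hu : ∀ i, ContDiffOn ℝ (⊤ : ℕ∞) (u i) U)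
    (hρpos : ∀ x ∈ U, 0 < ρ x)
    (hmass : ∀ x ∈ U,
      pd 0 (fun y => ρ y * u 0 y) x + pd 1 (fun y => ρ y * u 1 y) x
        + pd 2 (fun y => ρ y * u 2 y) x = 0)
    (hmom : ∀ i : Fin 3, ∀ x ∈ U,
      pd 0 (fun y => ρ y * u i y * u 0 y) x + pd 1 (fun y => ρ y * u i y * u 1 y) x
        + pd 2 (fun y => ρ y * u i y * u 2 y) x + pd i (fun y => ρ y ^ γ / γ) x = 0)
    (n2 uw : (Fin 3 → ℝ) → ℝ)
    (hn2 : n2 = fun y => u 0 y ^ 2 + u 1 y ^ 2 + u 2 y ^ 2)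
    (huw : uw = fun y => u 0 y * curl u 0 y + u 1 y * curl u 1 y + u 2 y * curl u 2 y) :
    ∀ x ∈ U,
      n2 x * (u 0 x * pd 0 (fun y => uw y / ρ y) x + u 1 x * pd 1 (fun y => uw y / ρ y) x
          + u 2 x * pd 2 (fun y => uw y / ρ y) x)
        - uw x / ρ x * (u 0 x * pd 0 n2 x + u 1 x * pd 1 n2 x + u 2 x * pd 2 n2 x)
        + 2 * ρ x ^ (γ - 1) / ρ x ^ 2 *
          (n2 x * (curl u 0 x * pd 0 ρ x + curl u 1 x * pd 1 ρ x + curl u 2 x * pd 2 ρ x)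
            - uw x * (u 0 x * pd 0 ρ x + u 1 x * pd 1 ρ x + u 2 x * pd 2 ρ x)) = 0 := by
  intro x hx
  have flow : IsSteadyEulerFlow (fun r => r ^ γ / γ) ρ u U :=
    { isOpen := hU
      contDiffAt_pressure := fun y hy =>
        (Real.contDiffAt_rpow_const_of_ne (hρpos y hy).ne').div_const γ
      contDiffOn_density := hρ.of_le (by norm_cast)
      contDiffOn_velocity := fun i => (hu i).of_le (by norm_cast)
      density_ne_zero := fun y hy => (hρpos y hy).ne'
      mass := by simpa only [divergence, Fin.sum_univ_three] using hmass
      momentum := by simpa only [divergence, Fin.sum_univ_three] using hmom }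
  have identity := helicity_identity_general flow hx
  rw [deriv_rpow_div_exponent (by linarith) (hρpos x hx).ne'] at identity
  subst hn2 huw
  simpa only [convDeriv, helicityDensity, Fin.sum_univ_three] using identity
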